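/- arXiv:2006.13572 — 3 statements merged into one kernel-verified Lean document; each statement's English description precedes it below -/
import Mathlib

section
/- Let ψ₁,…,ψ_M : ℝ → ℝ be continuous functions that are linearly independent on [0,2π], let h₀ > 0, and let W_e, W_u, W_{Δu} : ℝ → ℝ be continuous nonnegative weight functions such that h₀²W_e(α) + W_u(α) + W_{Δu}(α) > 0 for all α ∈ [0,2π]. Fix θ_j, θ_j^e ∈ ℝ^M and define the cost 𝒥(θ) = ∫₀^{2π} [ W_e(α)(ψ(α)ᵀθ_j^e − h₀ ψ(α)ᵀ(θ − θ_j))² + W_u(α)(ψ(α)ᵀθ)² + W_{Δu}(α)(ψ(α)ᵀ(θ − θ_j))² ] dα, where ψ(α) = (ψ₁(α),…,ψ_M(α))ᵀ. Then 𝒥 has a unique global minimizer over ℝ^M, given by θ_{j+1} = Q_ψ θ_j + L_ψ θ_j^e, where M_ψ = G(h₀²W_e + W_u + W_{Δu}), Q_ψ = M_ψ⁻¹ G(h₀²W_e + W_{Δu}), and L_ψ = M_ψ⁻¹ G(h₀ W_e). -/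
open Matrix Finset intervalIntegral

/-- The weighted Gram matrix of the basis functions `ψ` with weight `w`:
`(gram M ψ w) k l = ∫₀^{2π} w(α) ψ_k(α) ψ_l(α) dα`. -/
noncomputable def gram (M : ℕ) (ψ : Fin M → ℝ → ℝ) (w : ℝ → ℝ) :
    Matrix (Fin M) (Fin M) ℝ :=
  Matrix.of fun k l => ∫ α in (0:ℝ)..(2 * Real.pi), w α * ψ k α * ψ l α

/-! The cost is a quadratic function `θ ↦ θᵀ M_ψ θ - 2 θᵀ b + c` whose linear term is
`b = G(h₀² W_e + W_Δu) θ_j + G(h₀ W_e) θ_j^e`. Pairing `M_ψ` with `θ` gives `∫ w (ψᵀθ)²` with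
`w > 0`, so linear independence of the basis makes `M_ψ` positive definite, and completing the
square identifies `M_ψ⁻¹ b = Q_ψ θ_j + L_ψ θ_j^e` as the only minimizer. -/

open MeasureTheory

section DotProduct

variable {R ι : Type*} [CommSemiring R] [Fintype ι]

lemma mul_dotProduct_mul_dotProduct (c : R) (u x y : ι → R) :
    c * (u ⬝ᵥ x) * (u ⬝ᵥ y) = ∑ k, ∑ l, x k * (c * u k * u l * y l) := by
  simp only [dotProduct]
  rw [mul_assoc, sum_mul_sum, mul_sum]
  simp only [mul_sum]
  exact sum_congr rfl fun k _ => sum_congr rfl fun l _ => by ring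

lemma dotProduct_mulVec_comm_of_isSymm {A : Matrix ι ι R} (hA : A.IsSymm) (x y : ι → R) :
    x ⬝ᵥ A *ᵥ y = y ⬝ᵥ A *ᵥ x := by
  rw [← dotProduct_transpose_mulVec, hA.eq]

end DotProduct

section Quadratic

variable {R ι : Type*} [CommRing R] [Fintype ι]

lemma completing_the_square {A : Matrix ι ι R} (hA : A.IsSymm) (x y : ι → R) :
    y ⬝ᵥ A *ᵥ y - 2 * y ⬝ᵥ A *ᵥ x =
      x ⬝ᵥ A *ᵥ x - 2 * x ⬝ᵥ A *ᵥ x + (y - x) ⬝ᵥ A *ᵥ (y - x) := by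
  simp only [mulVec_sub, dotProduct_sub, sub_dotProduct]
  linear_combination dotProduct_mulVec_comm_of_isSymm hA x y

lemma penalizedLeastSquares_eq_quadratic {E U D : Matrix ι ι R} (hE : E.IsSymm) (hD : D.IsSymm)
    (h : R) (e p x : ι → R) :
    (e - h • (x - p)) ⬝ᵥ E *ᵥ (e - h • (x - p)) + x ⬝ᵥ U *ᵥ x + (x - p) ⬝ᵥ D *ᵥ (x - p) =
      x ⬝ᵥ (h ^ 2 • E + U + D) *ᵥ x - 2 * x ⬝ᵥ ((h ^ 2 • E + D) *ᵥ p + (h • E) *ᵥ e) +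
        ((e + h • p) ⬝ᵥ E *ᵥ (e + h • p) + p ⬝ᵥ D *ᵥ p) := by
  simp only [add_mulVec, smul_mulVec, mulVec_add, mulVec_sub, mulVec_smul, dotProduct_add,
    dotProduct_sub, dotProduct_smul, add_dotProduct, sub_dotProduct, smul_dotProduct, smul_eq_mul]
  linear_combination -h * dotProduct_mulVec_comm_of_isSymm hE e x
    - h ^ 2 * dotProduct_mulVec_comm_of_isSymm hE p x
    - dotProduct_mulVec_comm_of_isSymm hD p x

lemma quadratic_inv_mulVec_lt [DecidableEq ι] {A : Matrix ι ι ℝ} (hA : A.PosDef) (b : ι → ℝ)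
    {y : ι → ℝ} (hy : y ≠ A⁻¹ *ᵥ b) :
    (A⁻¹ *ᵥ b) ⬝ᵥ A *ᵥ (A⁻¹ *ᵥ b) - 2 * (A⁻¹ *ᵥ b) ⬝ᵥ b < y ⬝ᵥ A *ᵥ y - 2 * y ⬝ᵥ b := by
  have hsolve : A *ᵥ (A⁻¹ *ᵥ b) = b := by
    rw [mulVec_mulVec, mul_nonsing_inv A ((isUnit_iff_isUnit_det A).1 hA.isUnit), one_mulVec]
  have hsq := completing_the_square (isHermitian_iff_isSymm.1 hA.isHermitian) (A⁻¹ *ᵥ b) y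
  have hpos := hA.dotProduct_mulVec_pos (sub_ne_zero.2 hy)
  rw [star_trivial] at hpos
  simp only [hsolve] at hsq ⊢
  linarith

end Quadratic

section WeightedGram

variable {X ι : Type*} [MeasurableSpace X] {μ : Measure X} {ψ : ι → X → ℝ} {v w : X → ℝ}

/-- The Gram matrix of the functions `ψ k` in the (possibly indefinite) inner product
`∫ w f g ∂μ`; `gram` is the case of Lebesgue measure on `[0, 2π]`. -/
noncomputable def weightedGram (μ : Measure X) (ψ : ι → X → ℝ) (w : X → ℝ) : Matrix ι ι ℝ :=
  Matrix.of fun k l => ∫ α, w α * ψ k α * ψ l α ∂μ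

/-- All entries of `weightedGram μ ψ w` are given by convergent integrals. -/
def GramIntegrable (μ : Measure X) (ψ : ι → X → ℝ) (w : X → ℝ) : Prop :=
  ∀ k l, Integrable (fun α => w α * ψ k α * ψ l α) μ

lemma weightedGram_isSymm (μ : Measure X) (ψ : ι → X → ℝ) (w : X → ℝ) :
    (weightedGram μ ψ w).IsSymm :=
  IsSymm.ext fun k l => by simp only [weightedGram, of_apply, mul_right_comm]

lemma GramIntegrable.add (hv : GramIntegrable μ ψ v) (hw : GramIntegrable μ ψ w) :
    GramIntegrable μ ψ (v + w) := fun k l => by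
  simp only [Pi.add_apply, add_mul]
  exact (hv k l).fun_add (hw k l)

lemma GramIntegrable.smul (c : ℝ) (hw : GramIntegrable μ ψ w) : GramIntegrable μ ψ (c • w) :=
  fun k l => by simpa only [Pi.smul_apply, smul_eq_mul, mul_assoc] using (hw k l).const_mul c

lemma weightedGram_add (hv : GramIntegrable μ ψ v) (hw : GramIntegrable μ ψ w) :
    weightedGram μ ψ (v + w) = weightedGram μ ψ v + weightedGram μ ψ w := by
  ext k l
  simp only [weightedGram, of_apply, Matrix.add_apply, Pi.add_apply, add_mul]
  exact integral_add (hv k l) (hw k l)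

lemma weightedGram_smul (μ : Measure X) (ψ : ι → X → ℝ) (c : ℝ) (w : X → ℝ) :
    weightedGram μ ψ (c • w) = c • weightedGram μ ψ w := by
  ext k l
  simp only [weightedGram, of_apply, Matrix.smul_apply, Pi.smul_apply, smul_eq_mul, mul_assoc,
    MeasureTheory.integral_const_mul]

variable [Fintype ι]

lemma GramIntegrable.integrable_dotProduct (hw : GramIntegrable μ ψ w) (x y : ι → ℝ) :
    Integrable (fun α => w α * ((ψ · α) ⬝ᵥ x) * ((ψ · α) ⬝ᵥ y)) μ := by
  simp only [mul_dotProduct_mul_dotProduct]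
  exact integrable_finsetSum _ fun k _ => integrable_finsetSum _ fun l _ =>
    ((hw k l).mul_const (y l)).const_mul (x k)

lemma dotProduct_weightedGram_mulVec (hw : GramIntegrable μ ψ w) (x y : ι → ℝ) :
    x ⬝ᵥ weightedGram μ ψ w *ᵥ y = ∫ α, w α * ((ψ · α) ⬝ᵥ x) * ((ψ · α) ⬝ᵥ y) ∂μ := by
  have hintegrable (k l) : Integrable (fun α => x k * (w α * ψ k α * ψ l α * y l)) μ :=
    ((hw k l).mul_const (y l)).const_mul (x k)
  simp only [mul_dotProduct_mul_dotProduct]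
  rw [integral_finsetSum _ fun k _ => integrable_finsetSum _ fun l _ => hintegrable k l]
  simp only [integral_finsetSum _ fun l _ => hintegrable _ l, MeasureTheory.integral_const_mul,
    MeasureTheory.integral_mul_const, dotProduct, mulVec, weightedGram, of_apply, mul_sum]

lemma weightedGram_posDef (hintegrable : GramIntegrable μ ψ w) (hw : ∀ᵐ α ∂μ, 0 < w α)
    (hψ : ∀ x : ι → ℝ, (∀ᵐ α ∂μ, (ψ · α) ⬝ᵥ x = 0) → x = 0) :
    (weightedGram μ ψ w).PosDef := by
  refine .of_dotProduct_mulVec_pos (isHermitian_iff_isSymm.2 (weightedGram_isSymm μ ψ w))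
    fun x hx => ?_
  rw [star_trivial, dotProduct_weightedGram_mulVec hintegrable]
  have hnonneg : 0 ≤ᵐ[μ] fun α => w α * ((ψ · α) ⬝ᵥ x) * ((ψ · α) ⬝ᵥ x) := by
    filter_upwards [hw] with α hα
    rw [Pi.zero_apply, mul_assoc]
    exact mul_nonneg hα.le (mul_self_nonneg _)
  refine (integral_nonneg_of_ae hnonneg).lt_of_ne' fun hzero => hx (hψ x ?_)
  rw [integral_eq_zero_iff_of_nonneg_ae hnonneg (hintegrable.integrable_dotProduct x x)] at hzero
  filter_upwards [hw, hzero] with α hα hα₀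
  simpa [hα.ne'] using hα₀

end WeightedGram

section Cost

variable {X ι : Type*} [MeasurableSpace X] [Fintype ι] {μ : Measure X} {ψ : ι → X → ℝ}
  {We Wu WΔu : X → ℝ}

/-- The ILC cost `𝒥(θ)`: weighted squares of the predicted error, of the input and of its change
between iterations. The measure `μ` is Lebesgue measure on `[0, 2π]` in the commutation-angle
domain; counting measure on finitely many angles gives the sampled cost. -/
noncomputable def ilcCost (μ : Measure X) (ψ : ι → X → ℝ) (h₀ : ℝ) (We Wu WΔu : X → ℝ)
    (θj θje θ : ι → ℝ) : ℝ :=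
  ∫ α, (We α * ((ψ · α) ⬝ᵥ θje - h₀ * ((ψ · α) ⬝ᵥ (θ - θj))) ^ 2
    + Wu α * ((ψ · α) ⬝ᵥ θ) ^ 2 + WΔu α * ((ψ · α) ⬝ᵥ (θ - θj)) ^ 2) ∂μ

/-- The updated parameter vector `Q_ψ θ_j + L_ψ θ_j^e`. -/
noncomputable def ilcUpdate [DecidableEq ι] (μ : Measure X) (ψ : ι → X → ℝ) (h₀ : ℝ)
    (We Wu WΔu : X → ℝ) (θj θje : ι → ℝ) : ι → ℝ :=
  let M := weightedGram μ ψ (h₀ ^ 2 • We + Wu + WΔu)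
  (M⁻¹ * weightedGram μ ψ (h₀ ^ 2 • We + WΔu)) *ᵥ θj + (M⁻¹ * weightedGram μ ψ (h₀ • We)) *ᵥ θje

lemma ilcCost_eq_dotProduct_weightedGram (hWe : GramIntegrable μ ψ We)
    (hWu : GramIntegrable μ ψ Wu) (hWΔ : GramIntegrable μ ψ WΔu) (h₀ : ℝ) (θj θje θ : ι → ℝ) :
    ilcCost μ ψ h₀ We Wu WΔu θj θje θ =
      (θje - h₀ • (θ - θj)) ⬝ᵥ weightedGram μ ψ We *ᵥ (θje - h₀ • (θ - θj))
        + θ ⬝ᵥ weightedGram μ ψ Wu *ᵥ θ + (θ - θj) ⬝ᵥ weightedGram μ ψ WΔu *ᵥ (θ - θj) := by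
  simp only [ilcCost, dotProduct_weightedGram_mulVec, hWe, hWu, hWΔ]
  rw [← integral_add (hWe.integrable_dotProduct _ _) (hWu.integrable_dotProduct _ _),
    ← integral_add ((hWe.integrable_dotProduct _ _).fun_add (hWu.integrable_dotProduct _ _))
      (hWΔ.integrable_dotProduct _ _)]
  simp only [dotProduct_sub _ θje, dotProduct_smul, smul_eq_mul, sq, mul_assoc]

lemma ilcCost_eq_quadratic (hWe : GramIntegrable μ ψ We) (hWu : GramIntegrable μ ψ Wu)
    (hWΔ : GramIntegrable μ ψ WΔu) (h₀ : ℝ) (θj θje θ : ι → ℝ) :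
    ilcCost μ ψ h₀ We Wu WΔu θj θje θ =
      θ ⬝ᵥ weightedGram μ ψ (h₀ ^ 2 • We + Wu + WΔu) *ᵥ θ
        - 2 * θ ⬝ᵥ (weightedGram μ ψ (h₀ ^ 2 • We + WΔu) *ᵥ θj
          + weightedGram μ ψ (h₀ • We) *ᵥ θje)
        + ((θje + h₀ • θj) ⬝ᵥ weightedGram μ ψ We *ᵥ (θje + h₀ • θj)
          + θj ⬝ᵥ weightedGram μ ψ WΔu *ᵥ θj) := by
  have hWe' := hWe.smul (h₀ ^ 2)
  rw [ilcCost_eq_dotProduct_weightedGram hWe hWu hWΔ, weightedGram_add (hWe'.add hWu) hWΔ,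
    weightedGram_add hWe' hWu, weightedGram_add hWe' hWΔ, weightedGram_smul, weightedGram_smul]
  exact penalizedLeastSquares_eq_quadratic (weightedGram_isSymm μ ψ We)
    (weightedGram_isSymm μ ψ WΔu) h₀ θje θj θ

theorem optimal_ilc_update_general [DecidableEq ι] (hWe : GramIntegrable μ ψ We)
    (hWu : GramIntegrable μ ψ Wu) (hWΔ : GramIntegrable μ ψ WΔu) (h₀ : ℝ)
    (hpos : ∀ᵐ α ∂μ, 0 < h₀ ^ 2 * We α + Wu α + WΔu α)
    (hψ : ∀ x : ι → ℝ, (∀ᵐ α ∂μ, (ψ · α) ⬝ᵥ x = 0) → x = 0) (θj θje : ι → ℝ) :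
    let J := ilcCost μ ψ h₀ We Wu WΔu θj θje
    let θnext := ilcUpdate μ ψ h₀ We Wu WΔu θj θje
    (∀ θ, J θnext ≤ J θ) ∧ (∀ θ, θ ≠ θnext → J θnext < J θ) := by
  intro J θnext
  have hM := weightedGram_posDef (((hWe.smul (h₀ ^ 2)).add hWu).add hWΔ) hpos hψ
  have hlt : ∀ θ, θ ≠ θnext → J θnext < J θ := by
    simp only [J, θnext, ilcUpdate, ← mulVec_mulVec, ← mulVec_add,
      ilcCost_eq_quadratic hWe hWu hWΔ, add_lt_add_iff_right]
    exact fun θ hθ => quadratic_inv_mulVec_lt hM _ hθ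
  exact ⟨fun θ => (eq_or_ne θ θnext).elim (fun h => h ▸ le_rfl) fun h => (hlt θ h).le, hlt⟩

end Cost

section Interval

lemma gram_eq_weightedGram {M : ℕ} (ψ : Fin M → ℝ → ℝ) (w : ℝ → ℝ) :
    gram M ψ w = weightedGram (volume.restrict (Set.Icc 0 (2 * Real.pi))) ψ w := by
  simp only [_root_.gram, weightedGram, integral_of_le Real.two_pi_pos.le,
    integral_Icc_eq_integral_Ioc]

variable {ι : Type*} {ψ : ι → ℝ → ℝ} {a b : ℝ}

lemma gramIntegrable_restrict_Icc (hψ : ∀ k, ContinuousOn (ψ k) (Set.Icc a b)) {w : ℝ → ℝ}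
    (hw : ContinuousOn w (Set.Icc a b)) : GramIntegrable (volume.restrict (Set.Icc a b)) ψ w :=
  fun k l => ((hw.mul (hψ k)).mul (hψ l)).integrableOn_Icc

lemma dotProduct_eq_zero_of_ae_restrict_Icc [Fintype ι]
    (hψ : ∀ k, ContinuousOn (ψ k) (Set.Icc a b)) (hab : a ≠ b) {x : ι → ℝ}
    (hx : ∀ᵐ α ∂volume.restrict (Set.Icc a b), (ψ · α) ⬝ᵥ x = 0) :
    ∀ α ∈ Set.Icc a b, (ψ · α) ⬝ᵥ x = 0 :=
  Measure.eqOn_Icc_of_ae_eq volume hab hx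
    (continuousOn_finsetSum _ fun k _ => (hψ k).mul continuousOn_const) continuousOn_const

end Interval

/-- **Theorem 2 of the paper.** The commutation-angle domain ILC cost has the
unique global minimizer `θ_{j+1} = Q_ψ θ_j + L_ψ θ_j^e`. -/
theorem optimal_ilc_update (M : ℕ) (ψ : Fin M → ℝ → ℝ)
    (hcont : ∀ k, Continuous (ψ k))
    (hli : ∀ x : Fin M → ℝ,
      (∀ α ∈ Set.Icc (0:ℝ) (2 * Real.pi), ∑ k, x k * ψ k α = 0) → x = 0)
    (h₀ : ℝ) (hh₀ : 0 < h₀)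
    (We Wu WΔu : ℝ → ℝ)
    (hWec : Continuous We) (hWuc : Continuous Wu) (hWΔc : Continuous WΔu)
    (hWe : ∀ α, 0 ≤ We α) (hWu : ∀ α, 0 ≤ Wu α) (hWΔ : ∀ α, 0 ≤ WΔu α)
    (hpos : ∀ α ∈ Set.Icc (0:ℝ) (2 * Real.pi),
      0 < h₀ ^ 2 * We α + Wu α + WΔu α)
    (θj θje : Fin M → ℝ) :
    let J : (Fin M → ℝ) → ℝ := fun θ =>
      ∫ α in (0:ℝ)..(2 * Real.pi),
        (We α * ((∑ k, ψ k α * θje k) - h₀ * ∑ k, ψ k α * (θ k - θj k)) ^ 2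
          + Wu α * (∑ k, ψ k α * θ k) ^ 2
          + WΔu α * (∑ k, ψ k α * (θ k - θj k)) ^ 2)
    let Mψ := gram M ψ (fun α => h₀ ^ 2 * We α + Wu α + WΔu α)
    let Qψ := Mψ⁻¹ * gram M ψ (fun α => h₀ ^ 2 * We α + WΔu α)
    let Lψ := Mψ⁻¹ * gram M ψ (fun α => h₀ * We α)
    let θnext := Qψ *ᵥ θj + Lψ *ᵥ θje
    (∀ θ, J θnext ≤ J θ) ∧ (∀ θ, θ ≠ θnext → J θnext < J θ) := by
  have hψ k : ContinuousOn (ψ k) (Set.Icc 0 (2 * Real.pi)) := (hcont k).continuousOn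
  simp only [gram_eq_weightedGram, integral_of_le Real.two_pi_pos.le,
    ← integral_Icc_eq_integral_Ioc]
  refine optimal_ilc_update_general (gramIntegrable_restrict_Icc hψ hWec.continuousOn)
    (gramIntegrable_restrict_Icc hψ hWuc.continuousOn)
    (gramIntegrable_restrict_Icc hψ hWΔc.continuousOn) h₀
    (ae_restrict_of_forall_mem measurableSet_Icc hpos) (fun x hx => hli x fun α hα => ?_) θj θje
  simpa only [dotProduct, mul_comm] using
    dotProduct_eq_zero_of_ae_restrict_Icc hψ Real.two_pi_pos.ne hx α hα
end

section
/- Let N, P ∈ ℝ^{M×M} be symmetric matrices with N positive semidefinite and P positive definite, and set M₀ = N + P and T = M₀⁻¹N. Then for every nonzero x ∈ ℝ^M, (Tx)ᵀ M₀ (Tx) < xᵀ M₀ x; equivalently, xᵀ N M₀⁻¹ N x < xᵀ M₀ x for all x ≠ 0. Hence T is a strict contraction with respect to the norm ‖x‖_{M₀} = √(xᵀ M₀ x). -/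
open Matrix

/-! Put `y = T x`, so that `(N + P) y = N x`. Completing the square gives
`xᴴ (N + P) x - yᴴ (N + P) y = xᴴ P x + (x - y)ᴴ N (x - y) + yᴴ P y`,
and on the right the first term is positive and the other two are nonnegative. -/

section Ring

variable {n R : Type*} [Fintype n] [Ring R] [StarRing R] {M N P : Matrix n n R} {x y : n → R}

theorem star_dotProduct_mulVec_of_isHermitian (hM : M.IsHermitian) (x y : n → R) :
    star x ⬝ᵥ (M *ᵥ y) = star (M *ᵥ x) ⬝ᵥ y := by
  rw [star_mulVec, hM.eq, dotProduct_mulVec]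

theorem star_dotProduct_mulVec_eq_of_mulVec_eq (hM : M.IsHermitian) (hN : N.IsHermitian)
    (hxy : M *ᵥ y = N *ᵥ x) : star x ⬝ᵥ (N *ᵥ y) = star y ⬝ᵥ (M *ᵥ y) := by
  rw [star_dotProduct_mulVec_of_isHermitian hN, ← hxy, star_dotProduct_mulVec_of_isHermitian hM]

theorem star_dotProduct_add_mulVec_eq_of_mulVec_eq (hN : N.IsHermitian) (hP : P.IsHermitian)
    (hxy : (N + P) *ᵥ y = N *ᵥ x) :
    star x ⬝ᵥ ((N + P) *ᵥ x) = star y ⬝ᵥ ((N + P) *ᵥ y) +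
      (star x ⬝ᵥ (P *ᵥ x) + star (x - y) ⬝ᵥ (N *ᵥ (x - y)) + star y ⬝ᵥ (P *ᵥ y)) := by
  have h_yx : star y ⬝ᵥ (N *ᵥ x) = star y ⬝ᵥ (N *ᵥ y) + star y ⬝ᵥ (P *ᵥ y) := by
    rw [← hxy, add_mulVec, dotProduct_add]
  have h_xy : star x ⬝ᵥ (N *ᵥ y) = star y ⬝ᵥ (N *ᵥ y) + star y ⬝ᵥ (P *ᵥ y) := by
    rw [star_dotProduct_mulVec_eq_of_mulVec_eq (hN.add hP) hN hxy, add_mulVec, dotProduct_add]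
  simp only [add_mulVec, mulVec_sub, star_sub, dotProduct_add, dotProduct_sub, sub_dotProduct,
    h_yx, h_xy]
  abel

theorem star_dotProduct_add_mulVec_lt_of_mulVec_eq [PartialOrder R] [AddLeftMono R]
    (hN : N.PosSemidef) (hP : P.PosDef) (hx : x ≠ 0) (hxy : (N + P) *ᵥ y = N *ᵥ x) :
    star y ⬝ᵥ ((N + P) *ᵥ y) < star x ⬝ᵥ ((N + P) *ᵥ x) := by
  rw [star_dotProduct_add_mulVec_eq_of_mulVec_eq hN.isHermitian hP.isHermitian hxy]
  have hPx := hP.dotProduct_mulVec_pos hx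
  have hNxy := hN.dotProduct_mulVec_nonneg (x - y)
  have hPy := hP.posSemidef.dotProduct_mulVec_nonneg y
  exact lt_add_of_pos_right _ (add_pos_of_pos_of_nonneg (add_pos_of_pos_of_nonneg hPx hNxy) hPy)

end Ring

theorem iteration_matrix_strict_contraction_general {n K : Type*} [Fintype n] [DecidableEq n]
    [Field K] [PartialOrder K] [StarRing K] [AddLeftMono K] {N P : Matrix n n K}
    (hN : N.PosSemidef) (hP : P.PosDef) {x : n → K} (hx : x ≠ 0) :
    star (((N + P)⁻¹ * N) *ᵥ x) ⬝ᵥ ((N + P) *ᵥ (((N + P)⁻¹ * N) *ᵥ x)) <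
        star x ⬝ᵥ ((N + P) *ᵥ x) ∧
      star x ⬝ᵥ ((N * (N + P)⁻¹ * N) *ᵥ x) < star x ⬝ᵥ ((N + P) *ᵥ x) := by
  have hM : (N + P).PosDef := hP.posSemidef_add hN
  have hxy : (N + P) *ᵥ (((N + P)⁻¹ * N) *ᵥ x) = N *ᵥ x := by
    rw [mulVec_mulVec, mul_nonsing_inv_cancel_left _ _ ((isUnit_iff_isUnit_det _).mp hM.isUnit)]
  have h_lt := star_dotProduct_add_mulVec_lt_of_mulVec_eq hN hP hx hxy
  refine ⟨h_lt, ?_⟩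
  rwa [Matrix.mul_assoc, ← mulVec_mulVec,
    star_dotProduct_mulVec_eq_of_mulVec_eq hM.isHermitian hN.isHermitian hxy]

/-- Supporting lemma for Theorem 3 of the paper: with `N` symmetric positive
semidefinite, `P` symmetric positive definite, `M₀ = N + P` and `T = M₀⁻¹ N`,
the iteration matrix `T` strictly decreases the `M₀`-weighted quadratic form of
every nonzero vector: `(Tx)ᵀ M₀ (Tx) < xᵀ M₀ x`, equivalently
`xᵀ N M₀⁻¹ N x < xᵀ M₀ x`.  Hence `T` is a strict contraction in the norm
`‖x‖_{M₀} = √(xᵀ M₀ x)`. -/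
theorem iteration_matrix_strict_contraction (M : ℕ)
    (N P : Matrix (Fin M) (Fin M) ℝ)
    (hNsymm : N.IsSymm) (hPsymm : P.IsSymm)
    (hN : N.PosSemidef) (hP : P.PosDef)
    (M₀ T : Matrix (Fin M) (Fin M) ℝ)
    (hM₀ : M₀ = N + P) (hT : T = M₀⁻¹ * N) :
    ∀ x : Fin M → ℝ, x ≠ 0 →
      ((T *ᵥ x) ⬝ᵥ (M₀ *ᵥ (T *ᵥ x)) < x ⬝ᵥ (M₀ *ᵥ x) ∧
        x ⬝ᵥ ((N * M₀⁻¹ * N) *ᵥ x) < x ⬝ᵥ (M₀ *ᵥ x)) ∧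
      Real.sqrt ((T *ᵥ x) ⬝ᵥ (M₀ *ᵥ (T *ᵥ x))) < Real.sqrt (x ⬝ᵥ (M₀ *ᵥ x)) := by
  intro x hx
  subst hM₀ hT
  have h_lt := iteration_matrix_strict_contraction_general hN hP hx
  have h_nonneg := (hP.posSemidef_add hN).posSemidef.dotProduct_mulVec_nonneg
  simp only [star_trivial] at h_lt h_nonneg
  exact ⟨h_lt, Real.sqrt_lt_sqrt (h_nonneg _) h_lt.1⟩
end

section
/- Let ψ₁,…,ψ_M : ℝ → ℝ be continuous and linearly independent on [0,2π], let h₀ > 0, and let W_e, W_u, W_{Δu} : ℝ → ℝ be continuous nonnegative weight functions such that either W_e(α) > 0 for all α ∈ [0,2π] or W_u(α) > 0 for all α ∈ [0,2π]. Define M_ψ = G(h₀²W_e + W_u + W_{Δu}), Q_ψ = M_ψ⁻¹ G(h₀²W_e + W_{Δu}), L_ψ = M_ψ⁻¹ G(h₀ W_e), fix c ∈ ℝ^M, and consider the ILC parameter iteration θ_{j+1} = Q_ψ θ_j + L_ψ (c − h₀ θ_j). Then there exists a unique fixed point θ* ∈ ℝ^M satisfying θ* = Q_ψ θ* + L_ψ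 (c − h₀ θ*), and for every initial parameter vector θ₀ ∈ ℝ^M the sequence (θ_j) converges to θ*. -/
open Matrix Finset Filter intervalIntegral

/-!
Write `G(w)` for `gram M ψ w`. Multiplying the update by `Mψ` turns the iteration into
`P θ_{j+1} = Q θ_j + b`, where `P = G(h₀² We + Wu + WΔu)`, `Q = G(WΔu)` and `b = G(h₀ We) c`. This
is the stationary iteration for `A θ = b` given by the splitting `A = P - Q` of
`A = G(h₀² We + Wu)`, so the Householder–John theorem applies: with `d_j` the difference of two
successive errors, the energy `eᴴ A e` of the error drops by `d_jᴴ (Pᴴ + Q) d_j` in each step. If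
`A` and `Pᴴ + Q` are positive definite, the energies converge, hence `d_j → 0`, and the error
`A⁻¹ P d_j` tends to `0` as well.
-/

section MulVec

variable {n R : Type*} [Fintype n] [CommRing R]

lemma eq_inv_mulVec_iff [DecidableEq n] {A : Matrix n n R} (hA : IsUnit A) {x b : n → R} :
    x = A⁻¹ *ᵥ b ↔ A *ᵥ x = b := by
  have hdet : IsUnit A.det := (isUnit_iff_isUnit_det A).1 hA
  constructor
  · rintro rfl
    rw [mulVec_mulVec, mul_nonsing_inv A hdet, one_mulVec]
  · rintro rfl
    rw [mulVec_mulVec, nonsing_inv_mul A hdet, one_mulVec]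

lemma mul_smul_add_mulVec_add_mul_mulVec_sub {m k : Type*} [Fintype m] (N : Matrix k m R)
    (C Q : Matrix m n R) (a : R) (c x : n → R) :
    (N * (a • C + Q)) *ᵥ x + (N * C) *ᵥ (c - a • x) = N *ᵥ (Q *ᵥ x + C *ᵥ c) := by
  rw [← mulVec_mulVec, ← mulVec_mulVec, ← mulVec_add, add_mulVec, smul_mulVec, mulVec_sub,
    mulVec_smul]
  congr 1
  abel

lemma star_sub_dotProduct_mulVec_sub_of_mulVec_eq [StarRing R] {P Q : Matrix n n R}
    (hPQ : (P - Q).IsHermitian) {x y : n → R} (hxy : P *ᵥ y = Q *ᵥ x) :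
    star (x - y) ⬝ᵥ (Pᴴ + Q) *ᵥ (x - y) =
      star x ⬝ᵥ (P - Q) *ᵥ x - star y ⬝ᵥ (P - Q) *ᵥ y := by
  have hP : P *ᵥ (x - y) = (P - Q) *ᵥ x := by rw [mulVec_sub, hxy, sub_mulVec]
  have hQ : Q *ᵥ (x - y) = (P - Q) *ᵥ y := by rw [mulVec_sub, ← hxy, sub_mulVec]
  calc star (x - y) ⬝ᵥ (Pᴴ + Q) *ᵥ (x - y)
      = star (P *ᵥ (x - y)) ⬝ᵥ (x - y) + star (x - y) ⬝ᵥ Q *ᵥ (x - y) := by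
        rw [add_mulVec, dotProduct_add, dotProduct_mulVec, ← star_mulVec]
    _ = star x ⬝ᵥ (P - Q) *ᵥ (x - y) + star (x - y) ⬝ᵥ (P - Q) *ᵥ y := by
        rw [hP, hQ, star_mulVec, hPQ.eq, ← dotProduct_mulVec]
    _ = star x ⬝ᵥ (P - Q) *ᵥ x - star y ⬝ᵥ (P - Q) *ᵥ y := by
        rw [mulVec_sub, dotProduct_sub, star_sub, sub_dotProduct]
        abel

end MulVec

section SplittingIteration

open scoped ComplexOrder Topology

variable {n 𝕜 : Type*} [Fintype n] [RCLike 𝕜]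

open scoped MatrixOrder Matrix.Norms.L2Operator in
lemma tendsto_zero_of_tendsto_re_dotProduct_mulVec {ι : Type*} {l : Filter ι}
    {A : Matrix n n 𝕜} (hA : A.PosDef) {x : ι → n → 𝕜}
    (hx : Tendsto (fun i => RCLike.re (star (x i) ⬝ᵥ A *ᵥ x i)) l (𝓝 0)) :
    Tendsto x l (𝓝 0) := by
  classical
  obtain ⟨B, hB, rfl⟩ :=
    CStarAlgebra.isStrictlyPositive_iff_eq_star_mul_self.mp hA.isStrictlyPositive
  have energy_eq (v : n → 𝕜) :
      RCLike.re (star v ⬝ᵥ (star B * B) *ᵥ v) = ∑ k, ‖(B *ᵥ v) k‖ ^ 2 := by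
    rw [← mulVec_mulVec, star_eq_conjTranspose, dotProduct_mulVec, ← star_mulVec]
    simp only [dotProduct, Pi.star_apply, RCLike.star_def, RCLike.conj_mul, map_sum]
    norm_cast
  have hBx : Tendsto (fun i => B *ᵥ x i) l (𝓝 0) := by
    refine tendsto_pi_nhds.2 fun k => squeeze_zero_norm (fun i => ?_)
      (by simpa using hx.sqrt)
    rw [energy_eq]
    exact Real.le_sqrt_of_sq_le
      (single_le_sum (f := fun k => ‖(B *ᵥ x i) k‖ ^ 2) (fun _ _ => sq_nonneg _) (mem_univ k))
  have hBBx : Tendsto (fun i => B⁻¹ *ᵥ B *ᵥ x i) l (𝓝 (B⁻¹ *ᵥ 0)) :=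
    ((Continuous.matrix_mulVec continuous_const continuous_id).tendsto 0).comp hBx
  simpa [nonsing_inv_mul B (B.isUnit_iff_isUnit_det.1 hB)] using hBBx

/-- `A = P - Q` is a P-regular splitting of the positive definite matrix `A`, which is the
hypothesis of the Householder–John theorem on the stationary iteration `P x_{j+1} = Q x_j + b`.
The matrix `A` is not a parameter: it is recovered as `P - Q`. -/
structure IsPRegularSplitting (P Q : Matrix n n 𝕜) : Prop where
  posDef_sub : (P - Q).PosDef
  posDef_conjTranspose_add : (Pᴴ + Q).PosDef

namespace IsPRegularSplitting

variable {P Q : Matrix n n 𝕜}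

lemma tendsto_zero (h : IsPRegularSplitting P Q) {e : ℕ → n → 𝕜}
    (he : ∀ j, P *ᵥ e (j + 1) = Q *ᵥ e j) : Tendsto e atTop (𝓝 0) := by
  classical
  let energy (j : ℕ) : ℝ := RCLike.re (star (e j) ⬝ᵥ (P - Q) *ᵥ e j)
  have energy_drop (j : ℕ) :
      RCLike.re (star (e j - e (j + 1)) ⬝ᵥ (Pᴴ + Q) *ᵥ (e j - e (j + 1))) =
        energy j - energy (j + 1) := by
    rw [star_sub_dotProduct_mulVec_sub_of_mulVec_eq h.posDef_sub.isHermitian (he j), map_sub]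
  have energy_antitone : Antitone energy := antitone_nat_of_succ_le fun j => by
    rw [← sub_nonneg, ← energy_drop]
    exact h.posDef_conjTranspose_add.posSemidef.re_dotProduct_nonneg _
  have energy_bddBelow : BddBelow (Set.range energy) :=
    ⟨0, Set.forall_mem_range.2 fun j => h.posDef_sub.posSemidef.re_dotProduct_nonneg _⟩
  have energy_tendsto := tendsto_atTop_ciInf energy_antitone energy_bddBelow
  have difference_tendsto : Tendsto (fun j => e j - e (j + 1)) atTop (𝓝 0) := by
    refine tendsto_zero_of_tendsto_re_dotProduct_mulVec h.posDef_conjTranspose_add ?_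
    simpa only [energy_drop, Function.comp_def, sub_self] using
      energy_tendsto.sub (energy_tendsto.comp (tendsto_add_atTop_nat 1))
  have error_eq (j : ℕ) : e j = (P - Q)⁻¹ *ᵥ P *ᵥ (e j - e (j + 1)) := by
    rw [eq_inv_mulVec_iff h.posDef_sub.isUnit, mulVec_sub, he, sub_mulVec]
  have hcont : Continuous fun v : n → 𝕜 => (P - Q)⁻¹ *ᵥ P *ᵥ v := by fun_prop
  rw [funext error_eq]
  simpa only [Function.comp_def, mulVec_zero] using (hcont.tendsto 0).comp difference_tendsto

variable [DecidableEq n]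

lemma isUnit_left (h : IsPRegularSplitting P Q) : IsUnit P := by
  have posDef_conjTranspose_add_self : (Pᴴ + P).PosDef := by
    simpa using h.posDef_conjTranspose_add.add h.posDef_sub
  refine mulVec_injective_iff_isUnit.1
    ((injective_iff_map_eq_zero P.mulVecLin).2 fun v (hv : P *ᵥ v = 0) => ?_)
  by_contra hv0
  simpa [add_mulVec, dotProduct_mulVec, ← star_mulVec, hv] using
    posDef_conjTranspose_add_self.dotProduct_mulVec_pos hv0

lemma eq_inv_mulVec_add_iff (h : IsPRegularSplitting P Q) {x b : n → 𝕜} :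
    x = P⁻¹ *ᵥ (Q *ᵥ x + b) ↔ x = (P - Q)⁻¹ *ᵥ b := by
  rw [eq_inv_mulVec_iff h.isUnit_left, eq_inv_mulVec_iff h.posDef_sub.isUnit, sub_mulVec,
    sub_eq_iff_eq_add']

theorem tendsto_inv_mulVec (h : IsPRegularSplitting P Q) {b : n → 𝕜} {x : ℕ → n → 𝕜}
    (hx : ∀ j, x (j + 1) = P⁻¹ *ᵥ (Q *ᵥ x j + b)) :
    Tendsto x atTop (𝓝 ((P - Q)⁻¹ *ᵥ b)) := by
  have fixed := (eq_inv_mulVec_iff h.isUnit_left).1 (h.eq_inv_mulVec_add_iff (b := b).2 rfl)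
  refine tendsto_sub_nhds_zero_iff.1 (h.tendsto_zero fun j => ?_)
  rw [mulVec_sub, fixed, (eq_inv_mulVec_iff h.isUnit_left).1 (hx j), mulVec_sub,
    add_sub_add_right_eq_sub]

end IsPRegularSplitting

end SplittingIteration

section Gram

open MeasureTheory Set

lemma intervalIntegral_mul_sq_pos {μ : Measure ℝ} [μ.IsOpenPosMeasure] [NullSingletonClass μ]
    {a b : ℝ} (hab : a < b) {w f : ℝ → ℝ} (hw : IntervalIntegrable w μ a b)
    (hwpos : ∀ᵐ α ∂μ.restrict (Icc a b), 0 < w α) (hf : ContinuousOn f (Icc a b))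
    (hf0 : ¬EqOn f 0 (Icc a b)) : 0 < ∫ α in a..b, w α * f α ^ 2 ∂μ := by
  have hnonneg : ∀ᵐ α ∂μ.restrict (Icc a b), 0 ≤ w α * f α ^ 2 := by
    filter_upwards [hwpos] with α hα using mul_nonneg hα.le (sq_nonneg _)
  have hint : IntervalIntegrable (fun α => w α * f α ^ 2) μ a b :=
    hw.mul_continuousOn ((uIcc_of_le hab.le).symm ▸ hf.pow 2)
  refine (intervalIntegral.integral_nonneg_of_ae_restrict hab.le hnonneg).lt_of_ne' fun h0 => ?_
  rw [intervalIntegral.integral_of_le hab.le, ← integral_Icc_eq_integral_Ioc,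
    integral_eq_zero_iff_of_nonneg_ae hnonneg
      ((intervalIntegrable_iff_integrableOn_Icc_of_le hab.le).1 hint)] at h0
  refine hf0 (Measure.eqOn_Icc_of_ae_eq μ hab.ne ?_ hf continuousOn_const)
  filter_upwards [h0, hwpos] with α hα hwα
  exact pow_eq_zero_iff two_ne_zero |>.1 ((mul_eq_zero.1 hα).resolve_left hwα.ne')

variable {M : ℕ} {ψ : Fin M → ℝ → ℝ} {v w : ℝ → ℝ}

lemma gram_const_mul (a : ℝ) : gram M ψ (fun α => a * w α) = a • gram M ψ w := by
  ext k l
  simp [_root_.gram, mul_assoc]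

lemma isHermitian_gram : (gram M ψ w).IsHermitian := by
  ext k l
  simp [_root_.gram, mul_right_comm]

variable (hψ : ∀ k, ContinuousOn (ψ k) (Icc 0 (2 * Real.pi)))
include hψ

lemma intervalIntegrable_gram_integrand (hw : IntervalIntegrable w volume 0 (2 * Real.pi))
    (k l : Fin M) :
    IntervalIntegrable (fun α => w α * ψ k α * ψ l α) volume 0 (2 * Real.pi) := by
  rw [← uIcc_of_le Real.two_pi_pos.le] at hψ
  exact (hw.mul_continuousOn (hψ k)).mul_continuousOn (hψ l)

lemma gram_add (hv : IntervalIntegrable v volume 0 (2 * Real.pi))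
    (hw : IntervalIntegrable w volume 0 (2 * Real.pi)) :
    gram M ψ (fun α => v α + w α) = gram M ψ v + gram M ψ w := by
  ext k l
  simp only [_root_.gram, of_apply, Matrix.add_apply, add_mul]
  exact intervalIntegral.integral_add (intervalIntegrable_gram_integrand hψ hv k l)
    (intervalIntegrable_gram_integrand hψ hw k l)

lemma dotProduct_gram_mulVec (hw : IntervalIntegrable w volume 0 (2 * Real.pi))
    (x y : Fin M → ℝ) :
    x ⬝ᵥ gram M ψ w *ᵥ y =
      ∫ α in 0..2 * Real.pi, w α * (∑ k, x k * ψ k α) * ∑ l, y l * ψ l α := by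
  have hint (k l : Fin M) :=
    ((intervalIntegrable_gram_integrand hψ hw k l).mul_const (y l)).const_mul (x k)
  calc x ⬝ᵥ gram M ψ w *ᵥ y
      = ∑ k, ∑ l, ∫ α in 0..2 * Real.pi, x k * (w α * ψ k α * ψ l α * y l) := by
        simp [dotProduct, mulVec, _root_.gram, mul_sum]
    _ = ∫ α in 0..2 * Real.pi, ∑ k, ∑ l, x k * (w α * ψ k α * ψ l α * y l) := by
        rw [intervalIntegral.integral_finsetSum fun k _ => ?_]
        · simp_rw [intervalIntegral.integral_finsetSum fun l _ => hint _ l]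
        · simpa only [Finset.sum_fn] using IntervalIntegrable.sum univ fun l _ => hint k l
    _ = ∫ α in 0..2 * Real.pi, w α * (∑ k, x k * ψ k α) * ∑ l, y l * ψ l α := by
        congr with α
        rw [mul_assoc, sum_mul_sum, mul_sum]
        simp_rw [mul_sum]
        congr! 2
        ring

theorem posDef_gram
    (hli : ∀ x : Fin M → ℝ, (∀ α ∈ Icc 0 (2 * Real.pi), ∑ k, x k * ψ k α = 0) → x = 0)
    (hw : IntervalIntegrable w volume 0 (2 * Real.pi))
    (hwpos : ∀ᵐ α ∂volume.restrict (Icc 0 (2 * Real.pi)), 0 < w α) : (gram M ψ w).PosDef := by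
  refine .of_dotProduct_mulVec_pos isHermitian_gram fun x hx => ?_
  have hcont : ContinuousOn (fun α => ∑ k, x k * ψ k α) (Icc 0 (2 * Real.pi)) := by fun_prop
  rw [star_trivial, dotProduct_gram_mulVec hψ hw]
  simp_rw [mul_assoc, ← sq]
  exact intervalIntegral_mul_sq_pos Real.two_pi_pos hw hwpos hcont fun h0 => hx (hli x h0)

theorem isPRegularSplitting_gram
    (hli : ∀ x : Fin M → ℝ, (∀ α ∈ Icc 0 (2 * Real.pi), ∑ k, x k * ψ k α = 0) → x = 0)
    (hv : IntervalIntegrable v volume 0 (2 * Real.pi))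
    (hw : IntervalIntegrable w volume 0 (2 * Real.pi))
    (hvpos : ∀ᵐ α ∂volume.restrict (Icc 0 (2 * Real.pi)), 0 < v α)
    (hvwpos : ∀ᵐ α ∂volume.restrict (Icc 0 (2 * Real.pi)), 0 < v α + 2 * w α) :
    IsPRegularSplitting (gram M ψ fun α => v α + w α) (gram M ψ w) where
  posDef_sub := by
    rw [gram_add hψ hv hw, add_sub_cancel_right]
    exact posDef_gram hψ hli hv hvpos
  posDef_conjTranspose_add := by
    rw [isHermitian_gram.eq, ← gram_add hψ (hv.add hw) hw]
    refine posDef_gram hψ hli ((hv.add hw).add hw) ?_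
    simpa only [two_mul, add_assoc] using hvwpos

end Gram

lemma mul_add_pos_of_pos_or_pos {R : Type*} [Semiring R] [PartialOrder R] [IsStrictOrderedRing R]
    {a x y : R} (ha : 0 < a) (hx : 0 ≤ x) (hy : 0 ≤ y) (hxy : 0 < x ∨ 0 < y) :
    0 < a * x + y := by
  rcases hxy with hx_pos | hy_pos
  · exact add_pos_of_pos_of_nonneg (mul_pos ha hx_pos) hy
  · exact add_pos_of_nonneg_of_pos (mul_nonneg ha.le hx) hy_pos

theorem ilc_convergence_general (M : ℕ) (ψ : Fin M → ℝ → ℝ)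
    (hψ : ∀ k, ContinuousOn (ψ k) (Set.Icc 0 (2 * Real.pi)))
    (hli : ∀ x : Fin M → ℝ,
      (∀ α ∈ Set.Icc (0:ℝ) (2 * Real.pi), ∑ k, x k * ψ k α = 0) → x = 0)
    (h₀ : ℝ) (We Wu WΔu : ℝ → ℝ)
    (hWe : IntervalIntegrable We MeasureTheory.volume 0 (2 * Real.pi))
    (hWu : IntervalIntegrable Wu MeasureTheory.volume 0 (2 * Real.pi))
    (hWΔu : IntervalIntegrable WΔu MeasureTheory.volume 0 (2 * Real.pi))
    (hpos : ∀ᵐ α ∂MeasureTheory.volume.restrict (Set.Icc 0 (2 * Real.pi)),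
      0 < h₀ ^ 2 * We α + Wu α)
    (hposΔ : ∀ᵐ α ∂MeasureTheory.volume.restrict (Set.Icc 0 (2 * Real.pi)),
      0 < h₀ ^ 2 * We α + Wu α + 2 * WΔu α)
    (c : Fin M → ℝ) :
    let Mψ := gram M ψ (fun α => h₀ ^ 2 * We α + Wu α + WΔu α)
    let Qψ := Mψ⁻¹ * gram M ψ (fun α => h₀ ^ 2 * We α + WΔu α)
    let Lψ := Mψ⁻¹ * gram M ψ (fun α => h₀ * We α)
    ∃ θstar : Fin M → ℝ,
      (θstar = Qψ *ᵥ θstar + Lψ *ᵥ (c - h₀ • θstar)) ∧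
      (∀ θ' : Fin M → ℝ, θ' = Qψ *ᵥ θ' + Lψ *ᵥ (c - h₀ • θ') → θ' = θstar) ∧
      (∀ θ : ℕ → Fin M → ℝ,
        (∀ j, θ (j + 1) = Qψ *ᵥ θ j + Lψ *ᵥ (c - h₀ • θ j)) →
        Tendsto θ atTop (nhds θstar)) := by
  intro Mψ Qψ Lψ
  have splitting : IsPRegularSplitting Mψ (gram M ψ WΔu) :=
    isPRegularSplitting_gram hψ hli ((hWe.const_mul _).add hWu) hWΔu hpos hposΔ
  have gram_numerator : gram M ψ (fun α => h₀ ^ 2 * We α + WΔu α) =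
      h₀ • gram M ψ (fun α => h₀ * We α) + gram M ψ WΔu := by
    rw [gram_add hψ (hWe.const_mul _) hWΔu, gram_const_mul, gram_const_mul, smul_smul, sq]
  have update_eq (θ : Fin M → ℝ) : Qψ *ᵥ θ + Lψ *ᵥ (c - h₀ • θ) =
      Mψ⁻¹ *ᵥ (gram M ψ WΔu *ᵥ θ + gram M ψ (fun α => h₀ * We α) *ᵥ c) := by
    simp only [Qψ, Lψ, gram_numerator, mul_smul_add_mulVec_add_mul_mulVec_sub]
  simp only [update_eq]
  exact ⟨_, splitting.eq_inv_mulVec_add_iff.2 rfl,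
    fun _ => splitting.eq_inv_mulVec_add_iff.1, fun _ => splitting.tendsto_inv_mulVec⟩

/-- **Convergence part of Theorem 3 of the paper.** The ILC parameter iteration
`θ_{j+1} = Q_ψ θ_j + L_ψ (c - h₀ θ_j)` has a unique fixed point `θ*`, and for
every initial parameter vector the sequence of iterates converges to `θ*`. -/
theorem ilc_convergence (M : ℕ) (ψ : Fin M → ℝ → ℝ)
    (hcont : ∀ k, Continuous (ψ k))
    (hli : ∀ x : Fin M → ℝ,
      (∀ α ∈ Set.Icc (0:ℝ) (2 * Real.pi), ∑ k, x k * ψ k α = 0) → x = 0)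
    (h₀ : ℝ) (hh₀ : 0 < h₀)
    (We Wu WΔu : ℝ → ℝ)
    (hWec : Continuous We) (hWuc : Continuous Wu) (hWΔc : Continuous WΔu)
    (hWe : ∀ α, 0 ≤ We α) (hWu : ∀ α, 0 ≤ Wu α) (hWΔ : ∀ α, 0 ≤ WΔu α)
    (hpos : (∀ α ∈ Set.Icc (0:ℝ) (2 * Real.pi), 0 < We α) ∨
            (∀ α ∈ Set.Icc (0:ℝ) (2 * Real.pi), 0 < Wu α))
    (c : Fin M → ℝ) :
    let Mψ := gram M ψ (fun α => h₀ ^ 2 * We α + Wu α + WΔu α)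
    let Qψ := Mψ⁻¹ * gram M ψ (fun α => h₀ ^ 2 * We α + WΔu α)
    let Lψ := Mψ⁻¹ * gram M ψ (fun α => h₀ * We α)
    ∃ θstar : Fin M → ℝ,
      (θstar = Qψ *ᵥ θstar + Lψ *ᵥ (c - h₀ • θstar)) ∧
      (∀ θ' : Fin M → ℝ, θ' = Qψ *ᵥ θ' + Lψ *ᵥ (c - h₀ • θ') → θ' = θstar) ∧
      (∀ θ : ℕ → Fin M → ℝ,
        (∀ j, θ (j + 1) = Qψ *ᵥ θ j + Lψ *ᵥ (c - h₀ • θ j)) →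
        Tendsto θ atTop (nhds θstar)) := by
  have hpos' (α : ℝ) (hα : α ∈ Set.Icc 0 (2 * Real.pi)) : 0 < h₀ ^ 2 * We α + Wu α :=
    mul_add_pos_of_pos_or_pos (pow_pos hh₀ 2) (hWe α) (hWu α) (hpos.imp (· α hα) (· α hα))
  exact ilc_convergence_general M ψ (fun k => (hcont k).continuousOn) hli h₀ We Wu WΔu
    (hWec.intervalIntegrable _ _) (hWuc.intervalIntegrable _ _) (hWΔc.intervalIntegrable _ _)
    (MeasureTheory.ae_restrict_of_forall_mem measurableSet_Icc hpos')
    (MeasureTheory.ae_restrict_of_forall_mem measurableSet_Icc fun α hα =>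
      add_pos_of_pos_of_nonneg (hpos' α hα) (mul_nonneg zero_le_two (hWΔ α))) c
end
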